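/- (Breakdown at consensus points for r > 1.) Let m > 0 and let r > 1 be real. Let p⁽¹⁾ = φ_{−m} and p⁽²⁾ = φ_m be the unit-variance Gaussian densities with means −m and m, set M_{2,r}(x) = ((1/2)(p⁽¹⁾(x)^r + p⁽²⁾(x)^r))^{1/r} and Z_{2,r} = ∫_ℝ M_{2,r}(x) dx. Then log(M_{2,r}(0)/Z_{2,r}) < (1/2) · (log p⁽¹⁾(0) + log p⁽²⁾(0)). -/

import Mathlib

/-!
At a point where all the densities agree, with common value `c`, every power mean of them is also
`c`, so the claim reads `log (c / Z) < log c`, that is, `1 < Z`. For `1 < r` the power mean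
dominates the arithmetic mean, whose integral is `1`, with equality only where the densities agree;
hence `1 < Z` as soon as two of them differ on a set of positive measure. For Gaussians with
different means this holds because their densities are continuous and distinct.
-/

open MeasureTheory Real

/-- The density of the one-dimensional Gaussian `N(μ, 1)`. -/
noncomputable def gaussianPdf (μ x : ℝ) : ℝ :=
  (2 * π) ^ (-(1 : ℝ) / 2) * Real.exp (-(x - μ) ^ 2 / 2)

section PowerMean

variable {ι : Type*} [Fintype ι] {w z : ι → ℝ} {r : ℝ}

/-- The power mean of order `r` of the values `z k` with weights `w k`. It is meant for nonnegative
weights of total mass `1`, nonnegative values and `r ≠ 0`; at `r = 0` the convention `1 / 0 = 0`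
makes it `1` rather than the geometric mean. -/
noncomputable def powerMean (w : ι → ℝ) (r : ℝ) (z : ι → ℝ) : ℝ :=
  (∑ k, w k * z k ^ r) ^ (1 / r)

lemma powerMean_const (hw : ∑ k, w k = 1) (hr : r ≠ 0) {c : ℝ} (hc : 0 ≤ c) :
    powerMean w r (fun _ ↦ c) = c := by
  rw [powerMean, ← Finset.sum_mul, hw, one_mul, one_div, rpow_rpow_inv hc hr]

lemma sum_mul_rpow_nonneg (hw : ∀ k, 0 ≤ w k) (hz : ∀ k, 0 ≤ z k) : 0 ≤ ∑ k, w k * z k ^ r :=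
  Finset.sum_nonneg fun k _ ↦ mul_nonneg (hw k) (rpow_nonneg (hz k) r)

lemma powerMean_nonneg (hw : ∀ k, 0 ≤ w k) (hz : ∀ k, 0 ≤ z k) : 0 ≤ powerMean w r z :=
  rpow_nonneg (sum_mul_rpow_nonneg hw hz) _

lemma powerMean_le_of_forall_le (hw : ∀ k, 0 ≤ w k) (hw1 : ∑ k, w k = 1) (hr : 0 < r)
    (hz : ∀ k, 0 ≤ z k) {b : ℝ} (hzb : ∀ k, z k ≤ b) : powerMean w r z ≤ b := by
  obtain ⟨k₀, -, -⟩ := Finset.exists_ne_zero_of_sum_ne_zero (hw1.trans_ne one_ne_zero)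
  have hb : 0 ≤ b := (hz k₀).trans (hzb k₀)
  rw [powerMean, one_div, rpow_inv_le_iff_of_pos (sum_mul_rpow_nonneg hw hz) hb hr]
  calc ∑ k, w k * z k ^ r ≤ ∑ k, w k * b ^ r := by
        gcongr with k
        exacts [hw k, hz k, hzb k]
    _ = b ^ r := by rw [← Finset.sum_mul, hw1, one_mul]

lemma sum_mul_lt_powerMean (hw : ∀ k, 0 < w k) (hw1 : ∑ k, w k = 1) (hr : 1 < r)
    (hz : ∀ k, 0 ≤ z k) {i j : ι} (hij : z i ≠ z j) : ∑ k, w k * z k < powerMean w r z := by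
  rw [powerMean, one_div, lt_rpow_inv_iff_of_pos
    (Finset.sum_nonneg fun k _ ↦ mul_nonneg (hw k).le (hz k))
    (sum_mul_rpow_nonneg (fun k ↦ (hw k).le) hz) (zero_lt_one.trans hr)]
  exact (strictConvexOn_rpow hr).map_sum_lt (fun k _ ↦ hw k) hw1 (fun k _ ↦ hz k)
    ⟨i, Finset.mem_univ i, j, Finset.mem_univ j, hij⟩

end PowerMean

section Density

variable {Ω : Type*} [MeasurableSpace Ω] {μ : Measure Ω}

/-- A real function is a probability density with respect to `μ`. The field
`integral_eq_one` includes integrability, since the Bochner integral of a function that is not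
integrable is `0`. -/
structure IsProbabilityDensity (μ : Measure Ω) (p : Ω → ℝ) : Prop where
  nonneg : ∀ x, 0 ≤ p x
  integral_eq_one : ∫ x, p x ∂μ = 1

lemma IsProbabilityDensity.integrable {p : Ω → ℝ} (hp : IsProbabilityDensity μ p) :
    Integrable p μ :=
  integrable_of_integral_eq_one hp.integral_eq_one

variable {ι : Type*} [Fintype ι] {w : ι → ℝ} {r : ℝ} {p : ι → Ω → ℝ}

lemma integrable_powerMean (hw : ∀ k, 0 ≤ w k) (hw1 : ∑ k, w k = 1) (hr : 0 < r)
    (hp : ∀ k x, 0 ≤ p k x) (hpi : ∀ k, Integrable (p k) μ) :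
    Integrable (fun x ↦ powerMean w r (p · x)) μ := by
  have hmeas : AEMeasurable (fun x ↦ powerMean w r (p · x)) μ :=
    (Finset.aemeasurable_fun_sum _ fun k _ ↦
      ((hpi k).aemeasurable.pow_const r).const_mul (w k)).pow_const (1 / r)
  refine (integrable_finsetSum Finset.univ fun k _ ↦ hpi k).mono' hmeas.aestronglyMeasurable
    (ae_of_all μ fun x ↦ ?_)
  rw [norm_of_nonneg (powerMean_nonneg hw (hp · x))]
  exact powerMean_le_of_forall_le hw hw1 hr (hp · x) fun k ↦
    Finset.single_le_sum (fun l _ ↦ hp l x) (Finset.mem_univ k)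

lemma integral_sum_mul_eq_one (hw1 : ∑ k, w k = 1) (hp : ∀ k, IsProbabilityDensity μ (p k)) :
    ∫ x, ∑ k, w k * p k x ∂μ = 1 := by
  rw [integral_finsetSum _ fun k _ ↦ (hp k).integrable.const_mul (w k)]
  simp only [integral_const_mul, (hp _).integral_eq_one, mul_one, hw1]

lemma one_lt_integral_powerMean (hw : ∀ k, 0 < w k) (hw1 : ∑ k, w k = 1) (hr : 1 < r)
    (hp : ∀ k, IsProbabilityDensity μ (p k)) {i j : ι} (hij : ¬ p i =ᵐ[μ] p j) :
    1 < ∫ x, powerMean w r (p · x) ∂μ := by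
  have hsum : Integrable (fun x ↦ ∑ k, w k * p k x) μ :=
    integrable_finsetSum _ fun k _ ↦ (hp k).integrable.const_mul (w k)
  have hpow : Integrable (fun x ↦ powerMean w r (p · x)) μ :=
    integrable_powerMean (fun k ↦ (hw k).le) hw1 (zero_lt_one.trans hr)
      (fun k ↦ (hp k).nonneg) (fun k ↦ (hp k).integrable)
  have hle (x : Ω) : ∑ k, w k * p k x ≤ powerMean w r (p · x) :=
    arith_mean_le_rpow_mean _ _ _ (fun k _ ↦ (hw k).le) hw1 (fun k _ ↦ (hp k).nonneg x) hr.le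
  rw [← integral_sum_mul_eq_one hw1 hp]
  refine (integral_mono hsum hpow hle).lt_of_ne fun heq ↦ hij ?_
  filter_upwards [(integral_eq_iff_of_ae_le hsum hpow (ae_of_all μ hle)).1 heq] with x hx
  by_contra hne
  exact (sum_mul_lt_powerMean hw hw1 hr (fun k ↦ (hp k).nonneg x) hne).ne hx

theorem breakdown_at_consensus_points_general (hw : ∀ k, 0 < w k) (hw1 : ∑ k, w k = 1)
    (hr : 1 < r) (hp : ∀ k, IsProbabilityDensity μ (p k)) {i j : ι} (hij : ¬ p i =ᵐ[μ] p j)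
    {x : Ω} {c : ℝ} (hc : 0 < c) (hx : ∀ k, p k x = c) :
    log (powerMean w r (p · x) / ∫ y, powerMean w r (p · y) ∂μ) < ∑ k, w k * log (p k x) := by
  have hZ : 1 < ∫ y, powerMean w r (p · y) ∂μ := one_lt_integral_powerMean hw hw1 hr hp hij
  simp only [hx, powerMean_const hw1 (zero_lt_one.trans hr).ne' hc.le, ← Finset.sum_mul, hw1,
    one_mul]
  exact log_lt_log (div_pos hc (zero_lt_one.trans hZ)) (div_lt_self hc hZ)

end Density

section Gaussian

open ProbabilityTheory

lemma gaussianPdf_pos (μ x : ℝ) : 0 < gaussianPdf μ x := by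
  unfold gaussianPdf
  positivity

lemma continuous_gaussianPdf (μ : ℝ) : Continuous (gaussianPdf μ) := by
  unfold gaussianPdf
  fun_prop

lemma gaussianPdf_eq_gaussianPDFReal (μ : ℝ) : gaussianPdf μ = gaussianPDFReal μ 1 := by
  have hconst : (2 * π) ^ (-(1 : ℝ) / 2) = (√(2 * π))⁻¹ := by
    rw [neg_div, rpow_neg (by positivity), sqrt_eq_rpow]
  ext x
  simp [gaussianPdf, gaussianPDFReal, hconst]

lemma isProbabilityDensity_gaussianPdf (μ : ℝ) : IsProbabilityDensity volume (gaussianPdf μ) where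
  nonneg x := (gaussianPdf_pos μ x).le
  integral_eq_one := by
    rw [gaussianPdf_eq_gaussianPDFReal, integral_gaussianPDFReal_eq_one μ one_ne_zero]

lemma gaussianPdf_apply_eq_iff {μ ν x : ℝ} : gaussianPdf μ x = gaussianPdf ν x ↔
    (x - μ) ^ 2 = (x - ν) ^ 2 := by
  have hconst : (2 * π) ^ (-(1 : ℝ) / 2) ≠ 0 := by positivity
  rw [gaussianPdf, gaussianPdf, mul_right_inj' hconst, exp_eq_exp, div_left_inj' two_ne_zero,
    neg_inj]

lemma gaussianPdf_injective : Function.Injective gaussianPdf := fun μ ν h ↦ by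
  have hsq : (μ - μ) ^ 2 = (μ - ν) ^ 2 := gaussianPdf_apply_eq_iff.1 (congrFun h μ)
  rw [sub_self, zero_pow two_ne_zero, eq_comm, sq_eq_zero_iff] at hsq
  exact sub_eq_zero.1 hsq

lemma gaussianPdf_ae_eq_iff {μ ν : ℝ} : gaussianPdf μ =ᵐ[volume] gaussianPdf ν ↔ μ = ν :=
  ((continuous_gaussianPdf μ).ae_eq_iff_eq volume (continuous_gaussianPdf ν)).trans
    gaussianPdf_injective.eq_iff

end Gaussian

/-- Breakdown at consensus points for `r > 1`: for the symmetric unit-variance Gaussians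
`φ_{-m}` and `φ_m` (with `m > 0`), the log of the normalized power mean density of order
`r > 1` at `x = 0` is strictly below the average of the individual log-densities there. -/
theorem breakdown_at_consensus_points
    (m r : ℝ) (hm : 0 < m) (hr : 1 < r) :
    Real.log ((((1 / 2) * (gaussianPdf (-m) 0 ^ r + gaussianPdf m 0 ^ r)) ^ (1 / r)) /
        (∫ x, ((1 / 2) * (gaussianPdf (-m) x ^ r + gaussianPdf m x ^ r)) ^ (1 / r)))
      < (1 / 2) * (Real.log (gaussianPdf (-m) 0) + Real.log (gaussianPdf m 0)) := by
  have hne : ¬ gaussianPdf (-m) =ᵐ[volume] gaussianPdf m :=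
    gaussianPdf_ae_eq_iff.not.2 (neg_lt_self hm).ne
  have hconsensus : ∀ k : Fin 2, gaussianPdf (![-m, m] k) 0 = gaussianPdf m 0 :=
    Fin.forall_fin_two.2 ⟨gaussianPdf_apply_eq_iff.2 (by simp), rfl⟩
  have h := breakdown_at_consensus_points_general (w := fun _ : Fin 2 ↦ 1 / 2)
    (p := fun k ↦ gaussianPdf (![-m, m] k)) (i := 0) (j := 1) (fun _ ↦ one_half_pos) (by norm_num)
    hr (fun _ ↦ isProbabilityDensity_gaussianPdf _) hne (gaussianPdf_pos m 0) hconsensus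
  simpa only [powerMean, Fin.sum_univ_two, Matrix.cons_val_zero, Matrix.cons_val_one,
    mul_add] using h
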